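/- For every real number x, the determinant of the symmetric 7×7 real matrix G(x) is nonzero, where the rows of G(x) are: (7, 1, 3x−10, x−4, x−4, 3x−10, x²−9x+20); (1, 7, x−4, 3x−10, 3x−10, x−4, x²−9x+20); (3x−10, x−4, 7x²−40x+66, x²−8x+18, 3x²−20x+34, x²−8x+16, 3x³−33x²+126x−166); (x−4, 3x−10, x²−8x+18, 7x²−40x+66, x²−8x+16, 3x²−20x+34, 3x³−33x²+126x−166); (x−4, 3x−10, 3x²−20x+34, x²−8x+16, 7x²−40x+66, x²−8x+18, 3x³−33x²+126x−166); (3x−10, x−4, x²−8x+16, 3x²−20x+34, x²−8x+18, 7x²−40x+66, 3x³−33x²+126x−166); (x²−9x+20, x²−9x+20, 3x³−33x²+126x−166, 3x³−33x²+126x−166, 3x³−33x²+126x−166, 3x³−33x²+126x−166, 7x⁴−94x³+499x²−1232x+1186). In particular G(N) is invertible for every natural number N. -/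

import Mathlib

/-- The Gram matrix of the seven intersection matrices of the Nykamp–Zhao homogeneous
coherent configuration, as a function of the (real) parameter `x` (the number of
vertices `N`). -/
def nykampZhaoGram (x : ℝ) : Matrix (Fin 7) (Fin 7) ℝ :=
  !![7, 1, 3 * x - 10, x - 4, x - 4, 3 * x - 10, x ^ 2 - 9 * x + 20;
     1, 7, x - 4, 3 * x - 10, 3 * x - 10, x - 4, x ^ 2 - 9 * x + 20;
     3 * x - 10, x - 4, 7 * x ^ 2 - 40 * x + 66, x ^ 2 - 8 * x + 18,
       3 * x ^ 2 - 20 * x + 34, x ^ 2 - 8 * x + 16,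
       3 * x ^ 3 - 33 * x ^ 2 + 126 * x - 166;
     x - 4, 3 * x - 10, x ^ 2 - 8 * x + 18, 7 * x ^ 2 - 40 * x + 66,
       x ^ 2 - 8 * x + 16, 3 * x ^ 2 - 20 * x + 34,
       3 * x ^ 3 - 33 * x ^ 2 + 126 * x - 166;
     x - 4, 3 * x - 10, 3 * x ^ 2 - 20 * x + 34, x ^ 2 - 8 * x + 16,
       7 * x ^ 2 - 40 * x + 66, x ^ 2 - 8 * x + 18,
       3 * x ^ 3 - 33 * x ^ 2 + 126 * x - 166;
     3 * x - 10, x - 4, x ^ 2 - 8 * x + 16, 3 * x ^ 2 - 20 * x + 34,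
       x ^ 2 - 8 * x + 18, 7 * x ^ 2 - 40 * x + 66,
       3 * x ^ 3 - 33 * x ^ 2 + 126 * x - 166;
     x ^ 2 - 9 * x + 20, x ^ 2 - 9 * x + 20, 3 * x ^ 3 - 33 * x ^ 2 + 126 * x - 166,
       3 * x ^ 3 - 33 * x ^ 2 + 126 * x - 166, 3 * x ^ 3 - 33 * x ^ 2 + 126 * x - 166,
       3 * x ^ 3 - 33 * x ^ 2 + 126 * x - 166,
       7 * x ^ 4 - 94 * x ^ 3 + 499 * x ^ 2 - 1232 * x + 1186]

theorem nz_p1 (x : ℝ) : 4 * x ^ 2 - 20 * x + 34 ≠ 0 := by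
  have : 0 < 4 * x ^ 2 - 20 * x + 34 := by nlinarith [sq_nonneg (2 * x - 5)]
  exact this.ne'

theorem nz_p2 (x : ℝ) : 8 * x ^ 2 - 44 * x + 66 ≠ 0 := by
  have : 0 < 8 * x ^ 2 - 44 * x + 66 := by nlinarith [sq_nonneg (4 * x - 11)]
  exact this.ne'

theorem nz_p3 (x : ℝ) : 16 * x ^ 2 - 72 * x + 108 ≠ 0 := by
  have : 0 < 16 * x ^ 2 - 72 * x + 108 := by nlinarith [sq_nonneg (4 * x - 9)]
  exact this.ne'

theorem nz_p6 (t : ℝ) : 4 * t ^ 4 * (58 * t ^ 2 + 34 * t + 5)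
    + t ^ 2 * (720 * t ^ 2 + 560 * t + 109) + (719 * t ^ 2 - 144 * t + 544) ≠ 0 := by
  have p1 : 0 ≤ 58 * t ^ 2 + 34 * t + 5 := by nlinarith [sq_nonneg (58 * t + 17)]
  have p2 : 0 ≤ 720 * t ^ 2 + 560 * t + 109 := by nlinarith [sq_nonneg (720 * t + 280)]
  have p3 : 0 < 719 * t ^ 2 - 144 * t + 544 := by nlinarith [sq_nonneg (719 * t - 72)]
  have q1 : 0 ≤ 4 * t ^ 4 * (58 * t ^ 2 + 34 * t + 5) := mul_nonneg (by positivity) p1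
  have q2 : 0 ≤ t ^ 2 * (720 * t ^ 2 + 560 * t + 109) := mul_nonneg (by positivity) p2
  exact (by linarith : 0 < 4 * t ^ 4 * (58 * t ^ 2 + 34 * t + 5)
    + t ^ 2 * (720 * t ^ 2 + 560 * t + 109) + (719 * t ^ 2 - 144 * t + 544)).ne'

set_option maxHeartbeats 1000000 in
theorem nz_kernel (x a b c d e f g : ℝ)
    (h : (nykampZhaoGram x).mulVec ![a, b, c, d, e, f, g] = 0) :
    a = 0 ∧ b = 0 ∧ c = 0 ∧ d = 0 ∧ e = 0 ∧ f = 0 ∧ g = 0 := by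
  have h0 := congrFun h 0
  have h1 := congrFun h 1
  have h2 := congrFun h 2
  have h3 := congrFun h 3
  have h4 := congrFun h 4
  have h5 := congrFun h 5
  have h6 := congrFun h 6
  clear h
  simp [nykampZhaoGram, Matrix.mulVec, dotProduct, Fin.sum_univ_succ] at h0 h1 h2 h3 h4 h5 h6
  have k1 : c + d - e - f = 0 := by
    have hp : 4 * x ^ 2 - 20 * x + 34 ≠ 0 := nz_p1 x
    refine (mul_eq_zero.mp ?_).resolve_left hp
    linear_combination h2 + h3 - h4 - h5
  have k2 : c - d + e - f = 0 := by
    have hp : 8 * x ^ 2 - 44 * x + 66 ≠ 0 := nz_p2 x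
    refine (mul_eq_zero.mp ?_).resolve_left hp
    linear_combination h2 - h3 + h4 - h5
  have hq : 16 * x ^ 2 - 72 * x + 108 ≠ 0 := nz_p3 x
  have F1 : 6 * (a - b) + (2 * x - 6) * (c - d - e + f) = 0 := by
    linear_combination h0 - h1
  have F2 : 2 * (2 * x - 6) * (a - b) + (4 * x ^ 2 - 20 * x + 30) * (c - d - e + f) = 0 := by
    linear_combination h2 - h3 - h4 + h5
  have k3 : a - b = 0 := by
    refine (mul_eq_zero.mp ?_).resolve_left hq
    linear_combination (4 * x ^ 2 - 20 * x + 30) * F1 - (2 * x - 6) * F2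
  have k4 : c - d - e + f = 0 := by
    refine (mul_eq_zero.mp ?_).resolve_left hq
    linear_combination 6 * F2 - 2 * (2 * x - 6) * F1
  obtain ⟨m, hm⟩ : ∃ m, m = 4 * x - 14 := ⟨_, rfl⟩
  obtain ⟨S, hS⟩ : ∃ S, S = 12 * x ^ 2 - 76 * x + 134 := ⟨_, rfl⟩
  obtain ⟨p, hp⟩ : ∃ p, p = x ^ 2 - 9 * x + 20 := ⟨_, rfl⟩
  obtain ⟨q, hq⟩ : ∃ q, q = 3 * x ^ 3 - 33 * x ^ 2 + 126 * x - 166 := ⟨_, rfl⟩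
  obtain ⟨r, hr⟩ : ∃ r, r = 7 * x ^ 4 - 94 * x ^ 3 + 499 * x ^ 2 - 1232 * x + 1186 := ⟨_, rfl⟩
  have hD : 8 * S * r - 32 * q ^ 2 - 2 * m ^ 2 * r + 8 * m * p * q - 2 * p ^ 2 * S ≠ 0 := by
    have e1 : 8 * S * r - 32 * q ^ 2 - 2 * m ^ 2 * r + 8 * m * p * q - 2 * p ^ 2 * S
        = 4 * (x - 3) ^ 4 * (58 * (x - 3) ^ 2 + 34 * (x - 3) + 5)
          + (x - 3) ^ 2 * (720 * (x - 3) ^ 2 + 560 * (x - 3) + 109)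
          + (719 * (x - 3) ^ 2 - 144 * (x - 3) + 544) := by
      rw [hm, hS, hp, hq, hr]; ring
    rw [e1]
    exact nz_p6 (x - 3)
  have G1 : 8 * (a + b) + m * (c + d + e + f) + 2 * p * g = 0 := by
    rw [hm, hp]; linear_combination h0 + h1
  have G2 : 2 * m * (a + b) + S * (c + d + e + f) + 4 * q * g = 0 := by
    rw [hm, hS, hq]; linear_combination h2 + h3 + h4 + h5
  have G3 : p * (a + b) + q * (c + d + e + f) + r * g = 0 := by
    rw [hp, hq, hr]; linear_combination h6
  have k5 : a + b = 0 := by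
    refine (mul_eq_zero.mp ?_).resolve_left hD
    linear_combination (S * r - 4 * q ^ 2) * G1 - (m * r - 2 * p * q) * G2
      + (4 * m * q - 2 * p * S) * G3
  have k6 : c + d + e + f = 0 := by
    refine (mul_eq_zero.mp ?_).resolve_left hD
    linear_combination -(2 * m * r - 4 * p * q) * G1 + (8 * r - 2 * p ^ 2) * G2
      - (32 * q - 4 * p * m) * G3
  have k7 : g = 0 := by
    refine (mul_eq_zero.mp ?_).resolve_left hD
    linear_combination (2 * m * q - p * S) * G1 - (8 * q - p * m) * G2
      + (8 * S - 2 * m ^ 2) * G3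
  clear h0 h1 h2 h3 h4 h5 h6 F1 F2 G1 G2 G3
  refine ⟨?_, ?_, ?_, ?_, ?_, ?_, k7⟩ <;> linarith only [k1, k2, k3, k4, k5, k6]

theorem nz_det (x : ℝ) : (nykampZhaoGram x).det ≠ 0 := by
  intro h
  obtain ⟨v, hv, hv0⟩ := Matrix.exists_mulVec_eq_zero_iff.mpr h
  apply hv
  have e : v = ![v 0, v 1, v 2, v 3, v 4, v 5, v 6] := by
    ext i; fin_cases i <;> rfl
  rw [e] at hv0
  obtain ⟨a, b, c, d, e, f, g⟩ := nz_kernel x _ _ _ _ _ _ _ hv0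
  ext i
  fin_cases i <;> assumption

/-- the determinant of the Gram matrix `G(x)` is nonzero for every real `x`;
in particular `G(N)` is invertible for every natural number `N`. -/
theorem nykampZhaoGram_det_ne_zero :
    (∀ x : ℝ, (nykampZhaoGram x).det ≠ 0) ∧
    (∀ N : ℕ, IsUnit (nykampZhaoGram (N : ℝ))) := by
  refine ⟨nz_det, fun N => ?_⟩
  rw [Matrix.isUnit_iff_isUnit_det]
  exact (nz_det N).isUnit
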